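/- Let p, q, w ∈ ℝ² be pairwise distinct points. If the angle ∠(p, w, q) at w is strictly greater than π/2, then w ∈ R(p,q,β) for every β ∈ [1,∞], i.e., w lies in the open β-region of p and q for every finite β ≥ 1 and also in the open ∞-region R(p,q,∞). -/

import Mathlib

/-!
The angle at `w` is obtuse exactly when `⟪p - w, q - w⟫ < 0`. Expanding squared norms around `w`,
membership in each disk, and in each half-plane bounding the strip, becomes an inequality that
is linear in `⟪p - w, q - w⟫` and the squared distance from `w` to `p` or `q`; negativity of the
inner product and `1 ≤ β` give it. The two disks, and the two half-planes, are exchanged by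
swapping `p` and `q`, so one inequality of each kind suffices (`mem_ball_of_inner_neg`,
`inner_pos_of_inner_neg`).
-/

open scoped RealInnerProductSpace ENNReal

noncomputable section

/-- The Euclidean plane. -/
abbrev Plane : Type := EuclideanSpace ℝ (Fin 2)

/-- The open β-region of two points, for finite β ≥ 1. -/
def betaOpen (p q : Plane) (β : ℝ) : Set Plane :=
  Metric.ball ((1 - β / 2) • p + (β / 2) • q) (β * dist p q / 2) ∩
    Metric.ball ((β / 2) • p + (1 - β / 2) • q) (β * dist p q / 2)

/-- The closed β-region of two points, for finite β ≥ 1. -/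
def betaClosed (p q : Plane) (β : ℝ) : Set Plane :=
  Metric.closedBall ((1 - β / 2) • p + (β / 2) • q) (β * dist p q / 2) ∩
    Metric.closedBall ((β / 2) • p + (1 - β / 2) • q) (β * dist p q / 2)

/-- The open ∞-region: the open strip of points whose orthogonal projection on the
line through `p` and `q` lies strictly between `p` and `q`. -/
def stripOpen (p q : Plane) : Set Plane :=
  {w | 0 < ⟪w - p, q - p⟫ ∧ 0 < ⟪w - q, p - q⟫}

/-- The closed ∞-region. -/
def stripClosed (p q : Plane) : Set Plane :=
  {w | 0 ≤ ⟪w - p, q - p⟫ ∧ 0 ≤ ⟪w - q, p - q⟫}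

/-- The open β-region, for β ∈ [1,∞] encoded as `ℝ≥0∞`. -/
def Ropen (p q : Plane) (β : ℝ≥0∞) : Set Plane :=
  if β = ⊤ then stripOpen p q else betaOpen p q β.toReal

/-- The closed β-region, for β ∈ [1,∞] encoded as `ℝ≥0∞`. -/
def Rclosed (p q : Plane) (β : ℝ≥0∞) : Set Plane :=
  if β = ⊤ then stripClosed p q else betaClosed p q β.toReal

/-- A drawing of a pair of graphs: a pair of injective maps with disjoint images. -/
def IsDrawingPair {V₀ V₁ : Type*} (Γ₀ : V₀ → Plane) (Γ₁ : V₁ → Plane) : Prop :=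
  Function.Injective Γ₀ ∧ Function.Injective Γ₁ ∧
    Disjoint (Set.range Γ₀) (Set.range Γ₁)

/-- Mutual witness β-drawing (open/closed version): adjacent pairs have no witness in the
closed β-region, non-adjacent pairs have a witness in the open β-region. -/
def IsMWDrawing {V₀ V₁ : Type*} (G₀ : SimpleGraph V₀) (G₁ : SimpleGraph V₁)
    (Γ₀ : V₀ → Plane) (Γ₁ : V₁ → Plane) (β : ℝ≥0∞) : Prop :=
  IsDrawingPair Γ₀ Γ₁ ∧
  (∀ u v : V₀, u ≠ v →
    (G₀.Adj u v → ∀ w : V₁, Γ₁ w ∉ Rclosed (Γ₀ u) (Γ₀ v) β) ∧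
    (¬ G₀.Adj u v → ∃ w : V₁, Γ₁ w ∈ Ropen (Γ₀ u) (Γ₀ v) β)) ∧
  (∀ u v : V₁, u ≠ v →
    (G₁.Adj u v → ∀ w : V₀, Γ₀ w ∉ Rclosed (Γ₁ u) (Γ₁ v) β) ∧
    (¬ G₁.Adj u v → ∃ w : V₀, Γ₀ w ∈ Ropen (Γ₁ u) (Γ₁ v) β))

/-- Mutual witness MW-[β] drawing (closed version): adjacency iff no witness in the
closed β-region. -/
def IsMWClosedDrawing {V₀ V₁ : Type*} (G₀ : SimpleGraph V₀) (G₁ : SimpleGraph V₁)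
    (Γ₀ : V₀ → Plane) (Γ₁ : V₁ → Plane) (β : ℝ≥0∞) : Prop :=
  IsDrawingPair Γ₀ Γ₁ ∧
  (∀ u v : V₀, u ≠ v →
    (G₀.Adj u v ↔ ∀ w : V₁, Γ₁ w ∉ Rclosed (Γ₀ u) (Γ₀ v) β)) ∧
  (∀ u v : V₁, u ≠ v →
    (G₁.Adj u v ↔ ∀ w : V₀, Γ₀ w ∉ Rclosed (Γ₁ u) (Γ₁ v) β))

/-- Linear separability of a pair of drawings. -/
def LinearlySeparable {V₀ V₁ : Type*} (Γ₀ : V₀ → Plane) (Γ₁ : V₁ → Plane) : Prop :=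
  ∃ (a : Plane) (c : ℝ), a ≠ 0 ∧ (∀ v, ⟪a, Γ₀ v⟫ < c) ∧ (∀ v, c < ⟪a, Γ₁ v⟫)

/-- With `a = p - w` and `b = q - w` the claim is
`‖a + (β/2)(b - a)‖² - (β/2)²‖b - a‖² = (1 - β)‖a‖² + β⟪a, b⟫ < 0`. -/
theorem mem_ball_of_inner_neg {p q w : Plane} (h : ⟪p - w, q - w⟫ < 0)
    {β : ℝ} (hβ : 1 ≤ β) :
    w ∈ Metric.ball ((1 - β / 2) • p + (β / 2) • q) (β * dist p q / 2) := by
  obtain ⟨a, rfl⟩ : ∃ a, p = w + a := ⟨p - w, by abel⟩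
  obtain ⟨b, rfl⟩ : ∃ b, q = w + b := ⟨q - w, by abel⟩
  simp only [add_sub_cancel_left] at h
  have hcenter : (1 - β / 2) • (w + a) + (β / 2) • (w + b) - w
      = a + (β / 2) • (b - a) := by module
  rw [Metric.mem_ball, dist_comm, dist_eq_norm, hcenter, dist_comm, dist_eq_norm,
    add_sub_add_left_eq_sub]
  refine lt_of_pow_lt_pow_left₀ 2 (by positivity) ?_
  rw [norm_add_sq_real, norm_smul, inner_smul_right, inner_sub_right,
    real_inner_self_eq_norm_sq, mul_pow, Real.norm_eq_abs, sq_abs]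
  nlinarith [mul_nonneg (sub_nonneg.2 hβ) (sq_nonneg ‖a‖),
    mul_neg_of_pos_of_neg (zero_lt_one.trans_le hβ) h]

/-- With `a = p - w` and `b = q - w` the inner product is `‖a‖² - ⟪a, b⟫`. -/
theorem inner_pos_of_inner_neg {p q w : Plane} (h : ⟪p - w, q - w⟫ < 0) :
    0 < ⟪w - p, q - p⟫ := by
  have e : ⟪w - p, q - p⟫ = ‖p - w‖ ^ 2 - ⟪p - w, q - w⟫ := by
    rw [← real_inner_self_eq_norm_sq, ← inner_sub_right, ← inner_neg_neg]
    congr 1 <;> abel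
  rw [e]
  linarith [sq_nonneg ‖p - w‖]

/-- If the angle ∠(p, w, q) at `w` is strictly greater than π/2, then `w` lies in the
open β-region of `p` and `q` for every β ∈ [1,∞]. -/
theorem mem_open_region_of_obtuse_angle (p q w : Plane)
    (hpq : p ≠ q) (hwp : w ≠ p) (hwq : w ≠ q)
    (h : Real.pi / 2 < EuclideanGeometry.angle p w q) :
    ∀ β : ℝ≥0∞, 1 ≤ β → w ∈ Ropen p q β := by
  have hin : ⟪p - w, q - w⟫ < 0 := by
    by_contra hn
    refine absurd h (not_lt.2 (Real.arccos_le_pi_div_two.2 ?_))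
    exact div_nonneg (not_lt.1 hn) (by positivity)
  have hin' : ⟪q - w, p - w⟫ < 0 := by rwa [real_inner_comm]
  intro β hβ
  unfold Ropen
  split_ifs with ht
  · exact ⟨inner_pos_of_inner_neg hin, inner_pos_of_inner_neg hin'⟩
  · have hβ' : 1 ≤ β.toReal := by
      simpa using ENNReal.toReal_mono ht hβ
    refine ⟨mem_ball_of_inner_neg hin hβ', ?_⟩
    -- The second disk is the first one with `p` and `q` exchanged.
    rw [add_comm, dist_comm]
    exact mem_ball_of_inner_neg hin' hβ'

end
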